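/- Let q₀ ∈ ℍ ∖ ℝ and p ≥ 1. Then for all 0 ≤ k ≤ p, ((∂_c∂_s)^k Δ_{q₀}^p)(q₀) equals k! if k = p and equals 0 otherwise. -/

import Mathlib

noncomputable section

open Quaternion

abbrev ℍq := Quaternion ℝ

/-- Spherical value of a function of a quaternionic variable. -/
def svalue (f : ℍq → ℍq) (x : ℍq) : ℍq := (f x + f (star x)) / 2

/-- Spherical derivative of a function of a quaternionic variable. -/
def sderiv' (f : ℍq → ℍq) (x : ℍq) : ℍq := (2 * x.im)⁻¹ * (f x - f (star x))

/-- The imaginary unit `Im(x)/|Im(x)|` attached to a (non-real) quaternion. -/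
def qJ (x : ℍq) : ℍq := (‖x.im‖)⁻¹ • x.im

/-- Slice (Cullen) derivative `∂_c f = (1/2)(∂/∂α − I ∂/∂β) f` at `x = α + Iβ`. -/
def cderiv (f : ℍq → ℍq) (x : ℍq) : ℍq :=
  (1/2 : ℝ) • (fderiv ℝ f x 1 - qJ x * fderiv ℝ f x (qJ x))

/-- The conjugate operator `∂̄_c f = (1/2)(∂/∂α + I ∂/∂β) f`. -/
def cderivBar (f : ℍq → ℍq) (x : ℍq) : ℍq :=
  (1/2 : ℝ) • (fderiv ℝ f x 1 + qJ x * fderiv ℝ f x (qJ x))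

/-- A circular (axially symmetric) subset of the quaternions. -/
def IsCircular (Ω : Set ℍq) : Prop :=
  ∀ x ∈ Ω, ∀ y : ℍq, y.re = x.re → ‖y.im‖ = ‖x.im‖ → y ∈ Ω

/-- A slice function on `Ω`: it is determined by the representation formula
`f(α + Iβ) = F₀(α,β) + I F₁(α,β)` with `F₀ = v_s f`, `F₁ = β ∂_s f`. -/
def IsSlice (Ω : Set ℍq) (f : ℍq → ℍq) : Prop :=
  ∀ x ∈ Ω, ∀ y ∈ Ω, x.re = y.re → ‖x.im‖ = ‖y.im‖ →
    f x = svalue f y + x.im * sderiv' f y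

/-- A slice regular function on a circular domain: a real-differentiable slice
function whose stem function is holomorphic, i.e. `∂̄_c f = 0` off the reals. -/
def IsSliceRegular (Ω : Set ℍq) (f : ℍq → ℍq) : Prop :=
  IsSlice Ω f ∧ DifferentiableOn ℝ f Ω ∧ ∀ x ∈ Ω, x.im ≠ 0 → cderivBar f x = 0

/-- Pointwise formula for the slice product `f·g = 𝓘(FG)` of two slice functions. -/
def sprod (f g : ℍq → ℍq) (x : ℍq) : ℍq :=
  svalue f x * svalue g x + x.im * x.im * (sderiv' f x * sderiv' g x)
    + x.im * (svalue f x * sderiv' g x + sderiv' f x * svalue g x)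

/-- Characteristic polynomial of `q₀`: `Δ_{q₀}(x) = x² − 2 Re(q₀) x + |q₀|²`. -/
def Delta (q₀ : ℍq) (x : ℍq) : ℍq := x ^ 2 - 2 * (q₀.re : ℍq) * x + ((‖q₀‖ ^ 2 : ℝ) : ℍq)

/-- The operator `∂_c ∂_s`. -/
def opCS (f : ℍq → ℍq) : ℍq → ℍq := cderiv (sderiv' f)

/-- The operator `∂_s ∂_c`. -/
def opSC (f : ℍq → ℍq) : ℍq → ℍq := sderiv' (cderiv f)

/-!
In the real coordinates `s = Re x - Re q₀` and `t = |Im q₀|² - |Im x|²`, a slice function reads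
`f(x) = F₀(s, t) + Im x · F₁(s, t)`. Its spherical derivative is `F₁`, and the chain rule turns
`∂_c` of a real function `G(s, t)` into `½ ∂G/∂s + Im x · ∂G/∂t`. Hence, for `k ≥ 1`, the value of
`(∂_c∂_s)^k f` at `q₀` is that of `½ (∂/∂s) (∂/∂t)^(k-1) F₁ + Im q₀ · (∂/∂t)^k F₁` at `s = t = 0`.
For `f = Δ_{q₀}^p`, where `Δ_{q₀} = t + s (s + 2 Im x)`, the binomial expansion gives
`F₁ ≡ 2 p s t^(p-1)` modulo `s²`, so that all these values vanish except, for `k = p`,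
`½ (∂/∂s) (∂/∂t)^(p-1) F₁ = p (p-1)! = p!`.
-/

section Polynomial

open MvPolynomial

variable {R A σ : Type*} [CommSemiring R] [CommSemiring A] [Algebra R A]

theorem iterate_derivation_mul_of_eq_zero (D : Derivation R A A) {a : A} (ha : D a = 0) (k : ℕ)
    (b : A) : D^[k] (a * b) = a * D^[k] b :=
  have h_commute : Function.Commute D (a * ·) := fun b => by simp [ha]
  h_commute.iterate_left k b

theorem iterate_pderiv_X_pow (i : σ) (n k : ℕ) :
    (pderiv i)^[k] (X i ^ n : MvPolynomial σ R) = n.descFactorial k • X i ^ (n - k) := by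
  induction k with
  | zero => simp
  | succ k ih =>
    rw [Function.iterate_succ_apply', ih, map_nsmul, Derivation.leibniz_pow, pderiv_X_self,
      Nat.descFactorial_succ, Nat.sub_sub]
    simp [mul_left_comm, mul_assoc]

theorem eval_zero_iterate_pderiv_X_pow (i : σ) (n k : ℕ) :
    eval 0 ((pderiv i)^[k] (X i ^ n : MvPolynomial σ R))
      = if k = n then (k.factorial : R) else 0 := by
  rw [iterate_pderiv_X_pow]
  rcases lt_trichotomy k n with hkn | rfl | hnk
  · simp [hkn.ne, Nat.sub_ne_zero_of_lt hkn]
  · simp [Nat.descFactorial_self]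
  · simp [hnk.ne', Nat.descFactorial_of_lt hnk]

theorem hasFDerivAt_mvPolynomial_eval {𝕜 : Type*} [NontriviallyNormedField 𝕜] [Fintype σ]
    (P : MvPolynomial σ 𝕜) (v : σ → 𝕜) :
    HasFDerivAt (fun w => eval w P)
      (∑ i, eval v (pderiv i P) • (ContinuousLinearMap.proj i : (σ → 𝕜) →L[𝕜] 𝕜)) v := by
  classical
  induction P using MvPolynomial.induction_on with
  | C a =>
    simp only [eval_C]
    refine (hasFDerivAt_const a v).congr_fderiv ?_
    ext
    simp
  | add P Q hP hQ =>
    simp only [map_add]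
    refine (hP.fun_add hQ).congr_fderiv ?_
    ext
    simp [add_mul, Finset.sum_add_distrib]
  | mul_X P i hP =>
    simp only [map_mul, eval_X]
    refine (hP.fun_mul (hasFDerivAt_apply i v)).congr_fderiv ?_
    ext
    simp [pderiv_X, Pi.single_apply, apply_ite, add_mul, Finset.sum_add_distrib, Finset.mul_sum,
      mul_assoc]

end Polynomial

theorem sderiv'_eq_of_eq_add_im_mul {f : ℍq → ℍq} {x a b : ℍq} (hx : x.im ≠ 0)
    (h : f x = a + x.im * b) (h_star : f (star x) = a - x.im * b) : sderiv' f x = b := by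
  have : CharZero ℍq := algebraRat.charZero ℍq
  have h_diff : f x - f (star x) = 2 * x.im * b := by
    rw [h, h_star]
    noncomm_ring
  rw [sderiv', h_diff, inv_mul_cancel_left₀ (mul_ne_zero two_ne_zero hx)]

theorem norm_sq_eq_re_sq_add_norm_im_sq (x : ℍq) : ‖x‖ ^ 2 = x.re ^ 2 + ‖x.im‖ ^ 2 := by
  simp only [sq, ← Quaternion.normSq_eq_norm_mul_self, Quaternion.normSq_def', Quaternion.re_im,
    Quaternion.imI_im, Quaternion.imJ_im, Quaternion.imK_im]
  ring

theorem inner_im_qJ (x : ℍq) : inner ℝ x.im (qJ x) = ‖x.im‖ := by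
  rw [qJ, real_inner_smul_right, real_inner_self_eq_norm_mul_norm, ← mul_assoc,
    inv_mul_mul_self]

theorem norm_im_smul_qJ (x : ℍq) : ‖x.im‖ • qJ x = x.im := by
  rcases eq_or_ne x.im 0 with hx | hx
  · simp [hx]
  · exact smul_inv_smul₀ (norm_ne_zero_iff.2 hx) x.im

/-- The real coordinates `(s, t) = (Re x - Re q₀, |Im q₀|² - |Im x|²)` of `x`, in which slice
functions are expanded around the sphere of `q₀`, where `s = t = 0`. -/
def sliceCoord (q₀ x : ℍq) : Fin 2 → ℝ :=
  ![x.re - q₀.re, ‖q₀.im‖ ^ 2 - ‖x.im‖ ^ 2]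

theorem sliceCoord_self (q₀ : ℍq) : sliceCoord q₀ q₀ = 0 := by
  simp [sliceCoord]

theorem sliceCoord_star (q₀ x : ℍq) : sliceCoord q₀ (star x) = sliceCoord q₀ x := by
  simp [sliceCoord]

theorem hasFDerivAt_sliceCoord (q₀ x : ℍq) :
    HasFDerivAt (sliceCoord q₀)
      (ContinuousLinearMap.pi ![innerSL ℝ 1, -(2 • innerSL ℝ x.im)]) x := by
  have h_re : HasFDerivAt (fun y : ℍq => y.re) (innerSL ℝ (1 : ℍq)) x := by
    simpa [Quaternion.inner_def] using! (innerSL ℝ (1 : ℍq)).hasFDerivAt (x := x)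
  have h_im : HasFDerivAt (fun y : ℍq => ‖y.im‖ ^ 2) (2 • innerSL ℝ x.im) x := by
    simp only [← sub_eq_of_eq_add' (norm_sq_eq_re_sq_add_norm_im_sq _)]
    refine ((hasFDerivAt_id x).norm_sq.sub (h_re.pow 2)).congr_fderiv ?_
    ext v
    simp [Quaternion.inner_def]
    ring
  refine hasFDerivAt_pi'.2 fun i => ?_
  fin_cases i
  · exact h_re.sub_const _
  · exact h_im.const_sub _

section Calculus

variable {q₀ x : ℍq} {G : (Fin 2 → ℝ) → ℝ} {G' : (Fin 2 → ℝ) →L[ℝ] ℝ}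

theorem fderiv_coe_comp_sliceCoord (hG : HasFDerivAt G G' (sliceCoord q₀ x)) (v : ℍq) :
    fderiv ℝ (fun y => (G (sliceCoord q₀ y) : ℍq)) x v
      = (G' ![v.re, -2 * inner ℝ x.im v] : ℝ) := by
  have h_coord : ContinuousLinearMap.pi ![innerSL ℝ (1 : ℍq), -(2 • innerSL ℝ x.im)] v
      = ![v.re, -2 * inner ℝ x.im v] := by
    ext i
    fin_cases i
    · simp [Quaternion.inner_def]
    · simp
  have h_comp := (algebraMapCLM ℝ ℍq).hasFDerivAt.comp x (hG.comp x (hasFDerivAt_sliceCoord q₀ x))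
  rw [← h_coord]
  exact congrArg (· v) h_comp.fderiv

theorem cderiv_coe_comp_sliceCoord (hG : HasFDerivAt G G' (sliceCoord q₀ x)) :
    cderiv (fun y => (G (sliceCoord q₀ y) : ℍq)) x
      = ((1 / 2 * G' ![1, 0] : ℝ) : ℍq) + x.im * (G' ![0, 1] : ℝ) := by
  have h_one : G' ![(1 : ℍq).re, -2 * inner ℝ x.im 1] = G' ![1, 0] := by
    simp [Quaternion.inner_def]
  have h_qJ : G' ![(qJ x).re, -2 * inner ℝ x.im (qJ x)] = -2 * ‖x.im‖ * G' ![0, 1] := by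
    rw [inner_im_qJ, ← smul_eq_mul (-2 * ‖x.im‖) (G' _), ← map_smul]
    simp [qJ]
  rw [cderiv, fderiv_coe_comp_sliceCoord hG, fderiv_coe_comp_sliceCoord hG, h_one, h_qJ]
  calc (1 / 2 : ℝ) • (((G' ![1, 0] : ℝ) : ℍq) - qJ x * (-2 * ‖x.im‖ * G' ![0, 1] : ℝ))
      = ((1 / 2 * G' ![1, 0] : ℝ) : ℍq) + (‖x.im‖ • qJ x) * (G' ![0, 1] : ℝ) := by
        rw [Quaternion.mul_coe_eq_smul, Quaternion.mul_coe_eq_smul, ← Quaternion.smul_coe]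
        module
    _ = _ := by rw [norm_im_smul_qJ]

end Calculus

theorem add_im_mul_mul_add_im_mul (x : ℍq) (a b c d : ℝ) :
    ((a : ℍq) + x.im * b) * (c + x.im * d)
      = ((a * c + b * d * -‖x.im‖ ^ 2 : ℝ) : ℍq) + x.im * (a * d + b * c : ℝ) := by
  have h_sq : x.im * x.im = ((-‖x.im‖ ^ 2 : ℝ) : ℍq) := by
    rw [← sq, Quaternion.im_sq, Quaternion.normSq_eq_norm_mul_self, ← sq]
    push_cast
    rfl
  simp only [add_mul, mul_add, Quaternion.coe_mul_eq_smul, Quaternion.mul_coe_eq_smul,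
    smul_mul_smul_comm, h_sq, Quaternion.smul_coe, Quaternion.coe_add]
  rw [mul_comm c a]
  module

section Stem

open MvPolynomial

/-- Polynomial stem functions `F₀ + ω F₁` in the coordinates `(s, t) = (X 0, X 1)` of `sliceCoord`.
The generator `ω` stands for `Im x`, whence `ω² = t - |Im q₀|²`; the second component `F₁` is
therefore the spherical derivative itself, without the usual factor `|Im x|`. -/
abbrev StemAlgebra (q₀ : ℍq) : Type :=
  QuadraticAlgebra (MvPolynomial (Fin 2) ℝ) (X 1 - C (‖q₀.im‖ ^ 2)) 0

/-- The value at `x` of the slice function induced by a stem function. -/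
def stemEval (q₀ x : ℍq) : StemAlgebra q₀ →+* ℍq where
  toFun F := (eval (sliceCoord q₀ x) F.re : ℝ) + x.im * (eval (sliceCoord q₀ x) F.im : ℝ)
  map_one' := by simp [QuadraticAlgebra.re_one, QuadraticAlgebra.im_one]
  map_zero' := by simp
  map_add' F G := by
    simp only [QuadraticAlgebra.re_add, QuadraticAlgebra.im_add, map_add, Quaternion.coe_add,
      mul_add]
    abel
  map_mul' F G := by
    have h_sq : eval (sliceCoord q₀ x) (X 1 - C (‖q₀.im‖ ^ 2)) = -‖x.im‖ ^ 2 := by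
      simp [sliceCoord]
    rw [add_im_mul_mul_add_im_mul]
    congr 3
    · rw [QuadraticAlgebra.re_mul, map_add, map_mul, map_mul, map_mul, h_sq]
      ring
    · simp

theorem stemEval_apply (q₀ x : ℍq) (F : StemAlgebra q₀) :
    stemEval q₀ x F
      = (eval (sliceCoord q₀ x) F.re : ℝ) + x.im * (eval (sliceCoord q₀ x) F.im : ℝ) :=
  rfl

/-- `f` is the slice function induced by `F`. Only non-real points count, since `sderiv'` has the
junk value `0` on the real axis. -/
def HasStem {q₀ : ℍq} (f : ℍq → ℍq) (F : StemAlgebra q₀) : Prop :=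
  ∀ x : ℍq, x.im ≠ 0 → f x = stemEval q₀ x F

/-- The operator `∂_c ∂_s` on stem functions, which sends `F₀ + ω F₁` to `½ ∂F₁/∂s + ω ∂F₁/∂t`. -/
def stemOpCS {q₀ : ℍq} (F : StemAlgebra q₀) : StemAlgebra q₀ :=
  ⟨C (1 / 2) * pderiv 0 F.im, pderiv 1 F.im⟩

namespace HasStem

variable {q₀ : ℍq} {f : ℍq → ℍq} {F : StemAlgebra q₀}

theorem sderiv'_eq_eval (h : HasStem f F) {x : ℍq} (hx : x.im ≠ 0) :
    sderiv' f x = (eval (sliceCoord q₀ x) F.im : ℝ) := by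
  refine sderiv'_eq_of_eq_add_im_mul hx (h x hx) ?_
  have hx_star : (star x).im ≠ 0 := by simpa using hx
  rw [h _ hx_star, stemEval_apply, sliceCoord_star, Quaternion.im_star, neg_mul]
  exact (sub_eq_add_neg _ _).symm

protected theorem opCS (h : HasStem f F) : HasStem (opCS f) (stemOpCS F) := by
  intro x hx
  have h_nhds : sderiv' f =ᶠ[nhds x] fun y => (eval (sliceCoord q₀ y) F.im : ℝ) := by
    filter_upwards [Quaternion.continuous_im.continuousAt.eventually_ne hx] with y hy
    exact h.sderiv'_eq_eval hy
  calc cderiv (sderiv' f) x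
      = cderiv (fun y => (eval (sliceCoord q₀ y) F.im : ℝ)) x := by
        rw [cderiv, cderiv, h_nhds.fderiv_eq]
    _ = stemEval q₀ x (stemOpCS F) := by
        rw [cderiv_coe_comp_sliceCoord (hasFDerivAt_mvPolynomial_eval F.im _), stemEval_apply]
        simp [stemOpCS]

theorem iterate_opCS (h : HasStem f F) (k : ℕ) : HasStem (opCS^[k] f) (stemOpCS^[k] F) := by
  induction k with
  | zero => exact h
  | succ k ih =>
    rw [Function.iterate_succ_apply', Function.iterate_succ_apply']
    exact ih.opCS

end HasStem

theorem iterate_succ_stemOpCS {q₀ : ℍq} (F : StemAlgebra q₀) (k : ℕ) :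
    stemOpCS^[k + 1] F
      = ⟨C (1 / 2) * pderiv 0 ((pderiv 1)^[k] F.im), (pderiv 1)^[k + 1] F.im⟩ := by
  have h_im : (stemOpCS^[k] F).im = (pderiv 1)^[k] F.im :=
    Function.Semiconj.iterate_right (f := fun F : StemAlgebra q₀ => F.im) (fun _ => rfl) k F
  rw [Function.iterate_succ_apply', Function.iterate_succ_apply', stemOpCS, h_im]

/-- The stem function of `Δ_{q₀}`: as `x = Re q₀ + s + ω`, one has `Δ_{q₀} = (s + ω)² + |Im q₀|²`,
and `ω² = t - |Im q₀|²`. -/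
def deltaStem (q₀ : ℍq) : StemAlgebra q₀ :=
  ⟨X 0 ^ 2 + X 1, 2 * X 0⟩

theorem Delta_eq_stemEval (q₀ x : ℍq) : Delta q₀ x = stemEval q₀ x (deltaStem q₀) := by
  have h_id : stemEval q₀ x ⟨X 0 + C q₀.re, 1⟩ = x := by
    simp [stemEval_apply, sliceCoord]
  have h_const (r : ℝ) : stemEval q₀ x (QuadraticAlgebra.C (C r)) = r := by
    simp [stemEval_apply]
  have h_stem : deltaStem q₀ = ⟨X 0 + C q₀.re, 1⟩ ^ 2
      - 2 * .C (C q₀.re) * ⟨X 0 + C q₀.re, 1⟩ + .C (C (q₀.re ^ 2 + ‖q₀.im‖ ^ 2)) := by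
    ext1 <;> simp [deltaStem, sq, two_mul] <;> ring
  rw [Delta, norm_sq_eq_re_sq_add_norm_im_sq, h_stem, map_add, map_sub, map_mul, map_mul, map_pow,
    map_ofNat, h_id, h_const, h_const]

theorem Delta_self (q₀ : ℍq) : Delta q₀ q₀ = 0 := by
  simp [Delta_eq_stemEval, stemEval_apply, sliceCoord_self, deltaStem]

theorem hasStem_Delta_pow (q₀ : ℍq) (p : ℕ) :
    HasStem (fun x => Delta q₀ x ^ p) (deltaStem q₀ ^ p) := fun x _ => by
  simp only [map_pow, Delta_eq_stemEval]

theorem exists_im_deltaStem_pow (q₀ : ℍq) (p : ℕ) :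
    ∃ G, (deltaStem q₀ ^ p).im = X 0 * (C (2 * p : ℝ) * X 1 ^ (p - 1)) + X 0 ^ 2 * G := by
  have h_split : deltaStem q₀ = .C (X 1) + .C (X 0) * ⟨X 0, 2⟩ := by
    ext1
    · simp [deltaStem, sq, add_comm]
    · simp [deltaStem, mul_comm]
  obtain ⟨K, hK⟩ := Polynomial.powAddExpansion (.C (X 1) : StemAlgebra q₀) (.C (X 0) * ⟨X 0, 2⟩) p
  refine ⟨(K * (⟨X 0, 2⟩ : StemAlgebra q₀) ^ 2).im, ?_⟩
  rw [h_split, hK, mul_pow, mul_left_comm K, mul_assoc (p : StemAlgebra q₀)]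
  simp only [← QuadraticAlgebra.C_pow, ← QuadraticAlgebra.C_natCast,
    QuadraticAlgebra.C_mul_eq_smul, QuadraticAlgebra.im_add, QuadraticAlgebra.im_smul,
    QuadraticAlgebra.im_C, smul_eq_mul, map_mul, map_ofNat, map_natCast]
  ring

theorem exists_iterate_pderiv_im_deltaStem_pow (q₀ : ℍq) (p k : ℕ) :
    ∃ G, (pderiv 1)^[k] (deltaStem q₀ ^ p).im
      = X 0 * (C (2 * p : ℝ) * (pderiv 1)^[k] (X 1 ^ (p - 1))) + X 0 ^ 2 * G := by
  obtain ⟨G, hG⟩ := exists_im_deltaStem_pow q₀ p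
  refine ⟨(pderiv 1)^[k] G, ?_⟩
  have h_X : pderiv 1 (X 0 : MvPolynomial (Fin 2) ℝ) = 0 := pderiv_X_of_ne (by decide)
  rw [hG, iterate_map_add, iterate_derivation_mul_of_eq_zero _ h_X,
    iterate_derivation_mul_of_eq_zero _ pderiv_C,
    iterate_derivation_mul_of_eq_zero _ (by simp [Derivation.leibniz_pow, h_X])]

theorem eval_zero_iterate_pderiv_im_deltaStem_pow (q₀ : ℍq) (p k : ℕ) :
    eval 0 ((pderiv 1)^[k] (deltaStem q₀ ^ p).im) = 0 := by
  obtain ⟨G, hG⟩ := exists_iterate_pderiv_im_deltaStem_pow q₀ p k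
  simp [hG]

theorem eval_zero_pderiv_iterate_pderiv_im_deltaStem_pow (q₀ : ℍq) (p k : ℕ) :
    eval 0 (pderiv 0 ((pderiv 1)^[k] (deltaStem q₀ ^ p).im))
      = 2 * if k + 1 = p then ((k + 1).factorial : ℝ) else 0 := by
  obtain ⟨G, hG⟩ := exists_iterate_pderiv_im_deltaStem_pow q₀ p k
  have h_eval : eval 0 (pderiv 0 ((pderiv 1)^[k] (deltaStem q₀ ^ p).im))
      = 2 * p * if k = p - 1 then (k.factorial : ℝ) else 0 := by
    rw [← eval_zero_iterate_pderiv_X_pow (1 : Fin 2) (p - 1) k, hG]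
    simp [Derivation.leibniz_pow]
  rw [h_eval]
  cases p with
  | zero => simp
  | succ p =>
    rcases eq_or_ne k p with rfl | hkp
    · simp [Nat.factorial_succ, mul_assoc]
    · simp [hkp]

end Stem

theorem opCS_iterate_Delta_pow_general (q₀ : ℍq) (hq₀ : q₀.im ≠ 0) (p k : ℕ) :
    opCS^[k] (fun x => Delta q₀ x ^ p) q₀ = if k = p then (k.factorial : ℍq) else 0 := by
  cases k with
  | zero => simp [Delta_self, zero_pow_eq, eq_comm]
  | succ k =>
    rw [(hasStem_Delta_pow q₀ p).iterate_opCS (k + 1) q₀ hq₀, iterate_succ_stemOpCS,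
      stemEval_apply, sliceCoord_self, eval_zero_iterate_pderiv_im_deltaStem_pow, map_mul,
      eval_zero_pderiv_iterate_pderiv_im_deltaStem_pow]
    split_ifs
    · simp [← Quaternion.coe_natCast]
    · simp

/-- `((∂_c∂_s)^k Δ_{q₀}^p)(q₀) = k!` if `k = p`, `0` otherwise. -/
theorem opCS_iterate_Delta_pow (q₀ : ℍq) (hq₀ : q₀.im ≠ 0)
    (p k : ℕ) (hp : 1 ≤ p) (hk : k ≤ p) :
    opCS^[k] (fun x => Delta q₀ x ^ p) q₀
      = if k = p then (k.factorial : ℍq) else 0 :=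
  opCS_iterate_Delta_pow_general q₀ hq₀ p k
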